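/- Let m₁, m₂ ≥ 1 be integers, q₀ ∈ [1, ∞], and 1 < p, q < ∞ with p' = p/(p−1). Let u : ℝ → [0,∞) and v : (0,∞) → (0,∞) be measurable with u^q locally integrable with respect to |c(λ)|^{−2} dλ and v^{−p'} locally integrable with respect to Δ(t) dt on [0,∞). Suppose there is a constant C > 0 such that for every measurable f : (0,∞) → [0,∞) vanishing outside a bounded set, with ∫₀^{∞} (v(t) f(t))^p Δ(t) dt < ∞ and with t ↦ f(t) Φ(iρ_{q₀}, t) Δ(t) integrable, one has ( ∫_{ℝ} u(λ)^q | ∫₀^{∞} f(t) Φ(λ + iρ_{q₀}, t) Δ(t) dt |^q |c(λ)|^{−2} dλ )^{1/q} ≤ C ( ∫₀^{∞} (v(t) f(t))^p Δ(t) dt )^{1/p}. Then for every fixed θ₀ with 0 < θ₀ < π/2, sup_{s>0} ( ∫₀^{θ₀/s} u(λ)^q |c(λ)|^{−2} dλ )^{1/q} · ( ∫₀^{s} v(t)^{−p'} Φ(iρ_{q₀}, t)^{p'} Δ(t) dt )^{1/p'} < ∞. -/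

import Mathlib

open Set intervalIntegral MeasureTheory ENNReal

/-- The density `Δ(t) = (2 sinh t)^{m₁+m₂} (2 cosh t)^{m₂}`. -/
noncomputable def Δ (m₁ m₂ : ℕ) (t : ℝ) : ℝ :=
  (2 * Real.sinh t) ^ (m₁ + m₂) * (2 * Real.cosh t) ^ m₂

/-- The constant `c₀ = √π 2^{m₂/2-2} Γ((n-1)/2)/Γ(n/2)`, `n = m₁+m₂+1`. -/
noncomputable def c₀ (m₁ m₂ : ℕ) : ℝ :=
  Real.sqrt Real.pi * 2 ^ ((m₂ : ℝ)/2 - 2) *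
    Real.Gamma (((m₁ : ℝ) + m₂ + 1 - 1)/2) / Real.Gamma (((m₁ : ℝ) + m₂ + 1)/2)

/-- The half-sum of positive roots `ρ = (m₁ + 2m₂)/2`. -/
noncomputable def ρ₀ (m₁ m₂ : ℕ) : ℝ := ((m₁ : ℝ) + 2 * m₂) / 2

/-- `ρ_p = (2/p - 1) ρ` for `p ∈ [1,∞]` (for `p = ∞` this is `-ρ`). -/
noncomputable def rhoP (m₁ m₂ : ℕ) (p : ENNReal) : ℝ := (2 / p.toReal - 1) * ρ₀ m₁ m₂

/-- The Koornwinder integral representation of the elementary spherical function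
`φ_z(a_t)`, `z ∈ ℂ`. -/
noncomputable def PhiC (m₁ m₂ : ℕ) (z : ℂ) (t : ℝ) : ℂ :=
  ((c₀ m₁ m₂ * Real.sinh (2*t) / Δ m₁ m₂ t : ℝ) : ℂ) *
    ∫ s in (0:ℝ)..t,
      (((Real.cosh (2*t) - Real.cosh (2*s)) ^ ((m₂ : ℝ)/2 - 1) : ℝ) : ℂ) *
      (∫ r in (0:ℝ)..s,
        (((Real.cosh s - Real.cosh r) ^ ((m₁ : ℝ)/2 - 1) : ℝ) : ℂ) * Complex.cos (z * r)) *
      ((Real.sinh s : ℝ) : ℂ)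

/-- The Harish-Chandra `c`-function. -/
noncomputable def cHC (m₁ m₂ : ℕ) (lam : ℝ) : ℂ :=
  (2 : ℂ) ^ ((ρ₀ m₁ m₂ : ℂ) - Complex.I * lam) *
      Complex.Gamma (((m₁ : ℂ) + m₂ + 1) / 2) * Complex.Gamma (Complex.I * lam) /
    (Complex.Gamma (((ρ₀ m₁ m₂ : ℂ) + Complex.I * lam) / 2) *
      Complex.Gamma (((m₁ : ℂ) + 2) / 4 + Complex.I * lam / 2))

/-- The Plancherel density `|c(λ)|⁻²`. -/
noncomputable def densHC (m₁ m₂ : ℕ) (lam : ℝ) : ℝ := ‖cHC m₁ m₂ lam‖ ^ (-2 : ℤ)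

/-!
Write `b = ρ_{q₀}` and test Pitt's inequality on `f = v ^ (-p') Φ(ib, ·) ^ (p' - 1)`: this is the
equality case of Hölder's inequality, so that `(v f) ^ p = f Φ(ib, ·)`. To keep the integrals
finite, `f` is cut off to sets `E ⊆ (0, s)` on which `f Φ(ib, ·)` is integrable, and `(0, s)` is
exhausted by such sets at the end. For `0 < λ < θ₀ / s` and `0 < r < s` we have
`cos (λ r) ≥ cos θ₀ > 0`. Since `Re cos ((λ + ib) r) = cos (λ r) cosh (b r)` and all other factors
of the Koornwinder integral are nonnegative, the bound `Re Φ(λ + ib, t) ≥ cos θ₀ Φ(ib, t)` follows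
for `t < s`. The transform of `f` at such `λ` is thus at least `cos θ₀ ∫ f Φ(ib, ·) Δ`, and dividing
by the norm of `v f` gives the claim with constant `C / cos θ₀`.
-/

/-- `w` is a nonnegative real number which dominates `|z|` and is dominated by `Re z / κ`: the
relation between `Φ(ib, t)` and `Φ(λ + ib, t)` for small `λ t`. The majorant `w` is complex-valued
so that `PhiC` itself can take its place. -/
structure SectorMajorant (κ : ℝ) (w z : ℂ) : Prop where
  im_eq_zero : w.im = 0
  norm_le : ‖z‖ ≤ w.re
  mul_re_le : κ * w.re ≤ z.re

namespace SectorMajorant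

variable {κ : ℝ} {w z : ℂ}

theorem zero : SectorMajorant κ 0 0 where
  im_eq_zero := Complex.zero_im
  norm_le := by rw [norm_zero, Complex.zero_re]
  mul_re_le := by rw [Complex.zero_re, mul_zero]

theorem re_nonneg (h : SectorMajorant κ w z) : 0 ≤ w.re :=
  (norm_nonneg z).trans h.norm_le

theorem norm_left (h : SectorMajorant κ w z) : ‖w‖ = w.re := by
  rw [Complex.norm_eq_sqrt_sq_add_sq, h.im_eq_zero, zero_pow two_ne_zero, add_zero,
    Real.sqrt_sq h.re_nonneg]

theorem ofReal_re (h : SectorMajorant κ w z) : SectorMajorant κ (w.re : ℂ) z where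
  im_eq_zero := Complex.ofReal_im _
  norm_le := h.norm_le
  mul_re_le := h.mul_re_le

theorem ofReal_mul (h : SectorMajorant κ w z) {a : ℝ} (ha : 0 ≤ a) :
    SectorMajorant κ (a * w) (a * z) where
  im_eq_zero := by rw [Complex.im_ofReal_mul, h.im_eq_zero, mul_zero]
  norm_le := by
    rw [norm_mul, Complex.norm_of_nonneg ha, Complex.re_ofReal_mul]
    exact mul_le_mul_of_nonneg_left h.norm_le ha
  mul_re_le := by
    rw [Complex.re_ofReal_mul, Complex.re_ofReal_mul, mul_left_comm]
    exact mul_le_mul_of_nonneg_left h.mul_re_le ha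

theorem mul_ofReal (h : SectorMajorant κ w z) {a : ℝ} (ha : 0 ≤ a) :
    SectorMajorant κ (w * a) (z * a) := by
  simpa only [mul_comm] using h.ofReal_mul ha

section Integral

variable {α : Type*} [MeasurableSpace α] {μ : Measure α} {f g : α → ℂ}

theorem integrable_iff (hκ : 0 < κ) (hf : AEStronglyMeasurable f μ)
    (hg : AEStronglyMeasurable g μ) (h : ∀ᵐ x ∂μ, SectorMajorant κ (f x) (g x)) :
    Integrable g μ ↔ Integrable f μ := by
  refine ⟨fun hg' => (hg'.norm.const_mul κ⁻¹).mono' hf ?_, fun hf' => hf'.norm.mono' hg ?_⟩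
  · filter_upwards [h] with x hx
    rw [hx.norm_left, le_inv_mul_iff₀ hκ]
    exact hx.mul_re_le.trans (Complex.re_le_norm _)
  · filter_upwards [h] with x hx
    exact hx.norm_le.trans_eq hx.norm_left.symm

/- By `integrable_iff`, both integrals take the junk value `0` as soon as one of the two functions
is not integrable. -/
theorem integral (hκ : 0 < κ) (hf : AEStronglyMeasurable f μ) (hg : AEStronglyMeasurable g μ)
    (h : ∀ᵐ x ∂μ, SectorMajorant κ (f x) (g x)) :
    SectorMajorant κ (∫ x, f x ∂μ) (∫ x, g x ∂μ) := by
  by_cases hf' : Integrable f μ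
  · have hg' : Integrable g μ := (integrable_iff hκ hf hg h).2 hf'
    have hre : (∫ x, f x ∂μ).re = ∫ x, (f x).re ∂μ := (integral_re hf').symm
    refine ⟨?_, ?_, ?_⟩
    · calc (∫ x, f x ∂μ).im = ∫ x, (f x).im ∂μ := (integral_im hf').symm
        _ = 0 := integral_eq_zero_of_ae (h.mono fun x hx => hx.im_eq_zero)
    · rw [hre]
      exact norm_integral_le_of_norm_le hf'.re (h.mono fun x hx => hx.norm_le)
    · calc κ * (∫ x, f x ∂μ).re = ∫ x, κ * (f x).re ∂μ := by
            rw [hre, MeasureTheory.integral_const_mul]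
        _ ≤ ∫ x, (g x).re ∂μ :=
            integral_mono_ae (hf'.re.const_mul κ) hg'.re (h.mono fun x hx => hx.mul_re_le)
        _ = (∫ x, g x ∂μ).re := integral_re hg'
  · have hg' : ¬Integrable g μ := fun hg' => hf' ((integrable_iff hκ hf hg h).1 hg')
    rw [integral_undef hf', integral_undef hg']
    exact .zero

theorem intervalIntegral {μ : Measure ℝ} {f g : ℝ → ℂ} {a b : ℝ} (hκ : 0 < κ) (hab : a ≤ b)
    (hf : AEStronglyMeasurable f (μ.restrict (Ioc a b)))
    (hg : AEStronglyMeasurable g (μ.restrict (Ioc a b)))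
    (h : ∀ x ∈ Ioc a b, SectorMajorant κ (f x) (g x)) :
    SectorMajorant κ (∫ x in a..b, f x ∂μ) (∫ x in a..b, g x ∂μ) := by
  rw [intervalIntegral.integral_of_le hab, intervalIntegral.integral_of_le hab]
  exact .integral hκ hf hg (ae_restrict_of_forall_mem measurableSet_Ioc h)

end Integral

theorem cos_add_mul_I {x y : ℝ} (h : κ ≤ Real.cos x) :
    SectorMajorant κ (Complex.cos (y * Complex.I)) (Complex.cos (x + y * Complex.I)) := by
  have hw : Complex.cos (y * Complex.I) = (Real.cosh y : ℂ) := by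
    rw [Complex.cos_mul_I, Complex.ofReal_cosh]
  have hz : Complex.cos (x + y * Complex.I) =
      (Real.cos x * Real.cosh y : ℝ) + (-(Real.sin x * Real.sinh y) : ℝ) * Complex.I := by
    rw [Complex.cos_add_mul_I]
    push_cast
    ring
  rw [hw, hz]
  refine ⟨Complex.ofReal_im _, ?_, ?_⟩
  · rw [Complex.norm_add_mul_I, Complex.ofReal_re]
    refine Real.sqrt_le_iff.2 ⟨(Real.cosh_pos y).le, ?_⟩
    calc (Real.cos x * Real.cosh y) ^ 2 + (-(Real.sin x * Real.sinh y)) ^ 2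
        = Real.cosh y ^ 2 - Real.sin x ^ 2 := by rw [mul_pow, Real.cos_sq', Real.cosh_sq]; ring
      _ ≤ Real.cosh y ^ 2 := sub_le_self _ (sq_nonneg _)
  · rw [Complex.add_re, Complex.re_ofReal_mul, Complex.I_re, mul_zero, add_zero,
      Complex.ofReal_re, Complex.ofReal_re]
    exact mul_le_mul_of_nonneg_right h (Real.cosh_pos y).le

end SectorMajorant

section ParametricIntegral

variable {α E : Type*} [MeasurableSpace α] [NormedAddCommGroup E] [NormedSpace ℝ E]
  {μ : Measure ℝ} [SFinite μ] {a b : α → ℝ} {g : α → ℝ → E}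

theorem stronglyMeasurable_setIntegral_Ioc (hg : StronglyMeasurable (Function.uncurry g))
    (ha : Measurable a) (hb : Measurable b) :
    StronglyMeasurable fun x => ∫ s in Ioc (a x) (b x), g x s ∂μ := by
  let S : Set (α × ℝ) := {y | a y.1 < y.2 ∧ y.2 ≤ b y.1}
  have hS : MeasurableSet S :=
    (measurableSet_lt (ha.comp measurable_fst) measurable_snd).inter
      (measurableSet_le measurable_snd (hb.comp measurable_fst))
  have h_indicator (x : α) :
      ∫ s in Ioc (a x) (b x), g x s ∂μ = ∫ s, S.indicator (Function.uncurry g) (x, s) ∂μ :=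
    (MeasureTheory.integral_indicator measurableSet_Ioc).symm
  simp only [h_indicator]
  exact (hg.indicator hS).integral_prod_right'

theorem stronglyMeasurable_intervalIntegral (hg : StronglyMeasurable (Function.uncurry g))
    (ha : Measurable a) (hb : Measurable b) :
    StronglyMeasurable fun x => ∫ s in (a x)..(b x), g x s ∂μ :=
  (stronglyMeasurable_setIntegral_Ioc hg ha hb).sub (stronglyMeasurable_setIntegral_Ioc hg hb ha)

end ParametricIntegral

section Koornwinder

variable {m₁ m₂ : ℕ}

theorem measurable_delta : Measurable (Δ m₁ m₂) := by
  unfold Δ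
  fun_prop

theorem delta_nonneg {t : ℝ} (ht : 0 ≤ t) : 0 ≤ Δ m₁ m₂ t := by
  unfold Δ
  positivity

theorem c₀_nonneg : 0 ≤ c₀ m₁ m₂ := by
  have hΓ : 0 ≤ Real.Gamma (((m₁ : ℝ) + m₂ + 1 - 1) / 2) :=
    Real.Gamma_nonneg_of_nonneg (by rw [add_sub_cancel_right]; positivity)
  unfold c₀
  positivity

/-- The inner integral `∫₀ˢ (cosh s - cosh r)^{m₁/2-1} cos (z r) dr` of `PhiC`. -/
noncomputable def koornwinderInner (m₁ : ℕ) (z : ℂ) (s : ℝ) : ℂ :=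
  ∫ r in (0 : ℝ)..s,
    (((Real.cosh s - Real.cosh r) ^ ((m₁ : ℝ) / 2 - 1) : ℝ) : ℂ) * Complex.cos (z * r)

theorem measurable_koornwinderInner (z : ℂ) : Measurable (koornwinderInner m₁ z) := by
  have hkernel : Measurable (Function.uncurry fun s r : ℝ =>
      (((Real.cosh s - Real.cosh r) ^ ((m₁ : ℝ) / 2 - 1) : ℝ) : ℂ) * Complex.cos (z * r)) :=
    .mul (by fun_prop) (Continuous.measurable (by fun_prop))
  exact (stronglyMeasurable_intervalIntegral hkernel.stronglyMeasurable measurable_const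
    measurable_id).measurable

theorem phiC_eq (z : ℂ) (t : ℝ) :
    PhiC m₁ m₂ z t = ((c₀ m₁ m₂ * Real.sinh (2 * t) / Δ m₁ m₂ t : ℝ) : ℂ) *
      ∫ s in (0 : ℝ)..t,
        (((Real.cosh (2 * t) - Real.cosh (2 * s)) ^ ((m₂ : ℝ) / 2 - 1) : ℝ) : ℂ) *
          koornwinderInner m₁ z s * (Real.sinh s : ℂ) :=
  rfl

theorem measurable_phiC (z : ℂ) : Measurable (PhiC m₁ m₂ z) := by
  have hΔ : Measurable (Δ m₁ m₂) := measurable_delta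
  have hkernel : Measurable (Function.uncurry fun t s : ℝ =>
      (((Real.cosh (2 * t) - Real.cosh (2 * s)) ^ ((m₂ : ℝ) / 2 - 1) : ℝ) : ℂ) *
        koornwinderInner m₁ z s * (Real.sinh s : ℂ)) :=
    .mul (.mul (by fun_prop) ((measurable_koornwinderInner z).comp measurable_snd)) (by fun_prop)
  exact .mul (by fun_prop) (stronglyMeasurable_intervalIntegral hkernel.stronglyMeasurable
    measurable_const measurable_id).measurable

theorem sectorMajorant_koornwinderInner {κ l b s : ℝ} (hκ : 0 < κ) (hs : 0 ≤ s)
    (hcos : ∀ r ∈ Ioc 0 s, κ ≤ Real.cos (l * r)) :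
    SectorMajorant κ (koornwinderInner m₁ (Complex.I * b) s)
      (koornwinderInner m₁ (l + Complex.I * b) s) := by
  have hmeas (z : ℂ) : Measurable fun r : ℝ =>
      (((Real.cosh s - Real.cosh r) ^ ((m₁ : ℝ) / 2 - 1) : ℝ) : ℂ) * Complex.cos (z * r) :=
    .mul (by fun_prop) (Continuous.measurable (by fun_prop))
  refine .intervalIntegral hκ hs (hmeas _).aestronglyMeasurable (hmeas _).aestronglyMeasurable
    fun r hr => .ofReal_mul ?_ (Real.rpow_nonneg (sub_nonneg.2 ?_) _)
  · convert SectorMajorant.cos_add_mul_I (y := b * r) (hcos r hr) using 2 <;> push_cast <;> ring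
  · exact Real.cosh_strictMonoOn.monotoneOn hr.1.le hs hr.2

theorem sectorMajorant_phiC {κ l b t : ℝ} (hκ : 0 < κ) (ht : 0 ≤ t)
    (hcos : ∀ r ∈ Ioc 0 t, κ ≤ Real.cos (l * r)) :
    SectorMajorant κ (PhiC m₁ m₂ (Complex.I * b) t) (PhiC m₁ m₂ (l + Complex.I * b) t) := by
  have hmeas (z : ℂ) : Measurable fun s : ℝ =>
      (((Real.cosh (2 * t) - Real.cosh (2 * s)) ^ ((m₂ : ℝ) / 2 - 1) : ℝ) : ℂ) *
        koornwinderInner m₁ z s * (Real.sinh s : ℂ) :=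
    .mul (.mul (by fun_prop) (measurable_koornwinderInner z)) (by fun_prop)
  have hprefactor : 0 ≤ c₀ m₁ m₂ * Real.sinh (2 * t) / Δ m₁ m₂ t :=
    div_nonneg (mul_nonneg c₀_nonneg (Real.sinh_nonneg_iff.2 (by positivity))) (delta_nonneg ht)
  rw [phiC_eq, phiC_eq]
  refine .ofReal_mul (.intervalIntegral hκ ht (hmeas _).aestronglyMeasurable
    (hmeas _).aestronglyMeasurable fun s hs => ?_) hprefactor
  refine .mul_ofReal (.ofReal_mul ?_ (Real.rpow_nonneg (sub_nonneg.2 ?_) _))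
    (Real.sinh_nonneg_iff.2 hs.1.le)
  · exact sectorMajorant_koornwinderInner hκ hs.1.le fun r hr =>
      hcos r (Ioc_subset_Ioc_right hs.2 hr)
  · refine Real.cosh_strictMonoOn.monotoneOn (mul_nonneg zero_le_two hs.1.le)
      (mul_nonneg zero_le_two ht) ?_
    exact mul_le_mul_of_nonneg_left hs.2 zero_le_two

theorem phiC_re_nonneg {b t : ℝ} (ht : 0 ≤ t) : 0 ≤ (PhiC m₁ m₂ (Complex.I * b) t).re :=
  (sectorMajorant_phiC (l := 0) one_pos ht (by simp)).re_nonneg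

end Koornwinder
section LpInequalities

theorem rpow_setLIntegral_mul_le {β : Type*} [MeasurableSpace β] {ν : Measure β} {B : Set β}
    (hB : MeasurableSet B) {q : ℝ} (hq : 0 < q) {U g : β → ℝ≥0∞} {c : ℝ≥0∞}
    (hc : ∀ x ∈ B, c ≤ g x) :
    (∫⁻ x in B, U x ∂ν) ^ (1 / q) * c ≤ (∫⁻ x, U x * g x ^ q ∂ν) ^ (1 / q) := by
  calc (∫⁻ x in B, U x ∂ν) ^ (1 / q) * c
      = ((∫⁻ x in B, U x ∂ν) * c ^ q) ^ (1 / q) := by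
        rw [ENNReal.mul_rpow_of_nonneg _ _ (by positivity), one_div, ENNReal.rpow_rpow_inv hq.ne']
    _ ≤ (∫⁻ x in B, U x * c ^ q ∂ν) ^ (1 / q) := by
        gcongr
        exact lintegral_mul_const_le _ _
    _ ≤ (∫⁻ x in B, U x * g x ^ q ∂ν) ^ (1 / q) := by
        gcongr ?_ ^ _
        refine setLIntegral_mono' hB fun x hx => ?_
        gcongr
        exact hc x hx
    _ ≤ (∫⁻ x, U x * g x ^ q ∂ν) ^ (1 / q) := by
        gcongr
        exact Measure.restrict_le_self

theorem mul_rpow_one_div_conj_le {p p' : ℝ} (hpp' : p.HolderConjugate p') {a κ J C : ℝ≥0∞}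
    (hκ₀ : κ ≠ 0) (hκ : κ ≠ ∞) (hJ : J ≠ ∞) (h : a * (κ * J) ≤ C * J ^ (1 / p)) :
    a * J ^ (1 / p') ≤ C / κ := by
  have hp : 0 < 1 / p := one_div_pos.2 hpp'.pos
  have hp' : 0 < 1 / p' := one_div_pos.2 hpp'.symm.pos
  rcases eq_or_ne J 0 with rfl | hJ₀
  · simp only [ENNReal.zero_rpow_of_pos hp', mul_zero, zero_le]
  have hsplit : J ^ (1 / p') * J ^ (1 / p) = J := by
    rw [← ENNReal.rpow_add _ _ hJ₀ hJ, one_div, one_div, add_comm, hpp'.inv_add_inv_eq_one,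
      ENNReal.rpow_one]
  rw [ENNReal.le_div_iff_mul_le (.inl hκ₀) (.inl hκ),
    ← ENNReal.mul_le_mul_iff_left (ENNReal.rpow_pos (pos_iff_ne_zero.2 hJ₀) hJ).ne'
      (ENNReal.rpow_ne_top_of_nonneg hp.le hJ)]
  calc a * J ^ (1 / p') * κ * J ^ (1 / p) = a * (κ * (J ^ (1 / p') * J ^ (1 / p))) := by ring
    _ ≤ C * J ^ (1 / p) := by rwa [hsplit]

variable {α : Type*} [MeasurableSpace α] {μ : Measure α}

theorem mul_measure_rpow_le_of_forall_lt_top [SigmaFinite μ] {A : Set α} (hA : MeasurableSet A)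
    {r : ℝ} (hr : 0 < r) {c M : ℝ≥0∞}
    (h : ∀ E ⊆ A, MeasurableSet E → μ E < ∞ → c * μ E ^ r ≤ M) : c * μ A ^ r ≤ M := by
  have hsup : c * μ A ^ r = ⨆ n, c * μ (A ∩ spanningSets μ n) ^ r := by
    rw [← ENNReal.mul_iSup, ← Measure.iSup_restrict_spanningSets A]
    simp only [Measure.restrict_apply hA]
    exact congrArg _ ((ENNReal.orderIsoRpow r hr).map_iSup _)
  rw [hsup]
  exact iSup_le fun n => h _ inter_subset_left (hA.inter (measurableSet_spanningSets μ n))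
    ((measure_mono inter_subset_right).trans_lt (measure_spanningSets_lt_top μ n))

end LpInequalities

section DualTestFunction

variable {α : Type*}

/-- The function `v ^ (-p') φ ^ (p' - 1)` cut off to `E`, for which Hölder's inequality for
`∫ (v f) (v⁻¹ φ)` is an equality: the test function in the necessity part of weighted norm
inequalities. -/
noncomputable def dualTestFunction (p' : ℝ) (v φ : α → ℝ) (E : Set α) : α → ℝ :=
  E.indicator fun t => v t ^ (-p') * φ t ^ (p' - 1)

variable {p p' κ : ℝ} {v φ : α → ℝ} {E : Set α} {t : α}

theorem dualTestFunction_of_notMem (ht : t ∉ E) : dualTestFunction p' v φ E t = 0 :=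
  indicator_of_notMem ht _

theorem dualTestFunction_nonneg (hv₀ : ∀ t ∈ E, 0 < v t) (hφ₀ : ∀ t ∈ E, 0 ≤ φ t) (t : α) :
    0 ≤ dualTestFunction p' v φ E t :=
  indicator_nonneg (fun t ht =>
    mul_nonneg (Real.rpow_nonneg (hv₀ t ht).le _) (Real.rpow_nonneg (hφ₀ t ht) _)) t

theorem dualTestFunction_mul_nonneg (hv₀ : ∀ t ∈ E, 0 < v t) (hφ₀ : ∀ t ∈ E, 0 ≤ φ t) (t : α) :
    0 ≤ dualTestFunction p' v φ E t * φ t := by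
  by_cases ht : t ∈ E
  · exact mul_nonneg (dualTestFunction_nonneg hv₀ hφ₀ t) (hφ₀ t ht)
  · rw [dualTestFunction_of_notMem ht, zero_mul]

theorem dualTestFunction_mul (hp' : 1 < p') (hφ₀ : ∀ t ∈ E, 0 ≤ φ t) :
    dualTestFunction p' v φ E t * φ t = E.indicator (fun t => v t ^ (-p') * φ t ^ p') t := by
  by_cases ht : t ∈ E
  · have hφ : φ t ^ (p' - 1) * φ t = φ t ^ p' := by
      simpa using (Real.rpow_add_of_nonneg (hφ₀ t ht) (sub_nonneg.2 hp'.le) zero_le_one).symm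
    rw [dualTestFunction, indicator_of_mem ht, indicator_of_mem ht, mul_assoc, hφ]
  · rw [dualTestFunction_of_notMem ht, indicator_of_notMem ht, zero_mul]

theorem mul_dualTestFunction_rpow (hpp' : p.HolderConjugate p') (hv₀ : ∀ t ∈ E, 0 < v t)
    (hφ₀ : ∀ t ∈ E, 0 ≤ φ t) :
    (v t * dualTestFunction p' v φ E t) ^ p = dualTestFunction p' v φ E t * φ t := by
  rw [dualTestFunction_mul hpp'.symm.lt hφ₀]
  by_cases ht : t ∈ E
  · have hv := hv₀ t ht
    have hφ := hφ₀ t ht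
    have hexp : (p' - 1) * p = p' := hpp'.symm.sub_one_mul_conj
    have hbase : v t * (v t ^ (-p') * φ t ^ (p' - 1)) = v t ^ (1 - p') * φ t ^ (p' - 1) := by
      rw [← mul_assoc, sub_eq_add_neg 1 p', Real.rpow_add hv, Real.rpow_one]
    rw [dualTestFunction, indicator_of_mem ht, indicator_of_mem ht, hbase,
      Real.mul_rpow (Real.rpow_nonneg hv.le _) (Real.rpow_nonneg hφ _), ← Real.rpow_mul hv.le,
      ← Real.rpow_mul hφ, hexp, ← neg_sub p' 1, neg_mul, hexp]
  · rw [dualTestFunction_of_notMem ht, indicator_of_notMem ht, mul_zero,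
      Real.zero_rpow hpp'.ne_zero]

variable [MeasurableSpace α] {μ : Measure α}

theorem measurable_dualTestFunction (hv : Measurable v) (hφ : Measurable φ)
    (hE : MeasurableSet E) : Measurable (dualTestFunction p' v φ E) :=
  Measurable.indicator (by fun_prop) hE

theorem lintegral_dualTestFunction_mul (hp' : 1 < p') (hE : MeasurableSet E)
    (hφ₀ : ∀ t ∈ E, 0 ≤ φ t) :
    ∫⁻ t, ENNReal.ofReal (dualTestFunction p' v φ E t * φ t) ∂μ =
      ∫⁻ t in E, ENNReal.ofReal (v t ^ (-p') * φ t ^ p') ∂μ := by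
  rw [← lintegral_indicator hE]
  refine lintegral_congr fun t => ?_
  rw [dualTestFunction_mul hp' hφ₀]
  exact (congrFun (indicator_comp_of_zero ENNReal.ofReal_zero) t).symm

theorem lintegral_mul_dualTestFunction_rpow (hpp' : p.HolderConjugate p') (hE : MeasurableSet E)
    (hv₀ : ∀ t ∈ E, 0 < v t) (hφ₀ : ∀ t ∈ E, 0 ≤ φ t) :
    ∫⁻ t, ENNReal.ofReal (v t * dualTestFunction p' v φ E t) ^ p ∂μ =
      ∫⁻ t in E, ENNReal.ofReal (v t ^ (-p') * φ t ^ p') ∂μ := by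
  rw [← lintegral_dualTestFunction_mul hpp'.symm.lt hE hφ₀]
  refine lintegral_congr fun t => ?_
  have hvf : 0 ≤ v t * dualTestFunction p' v φ E t := by
    by_cases ht : t ∈ E
    · exact mul_nonneg (hv₀ t ht).le (dualTestFunction_nonneg hv₀ hφ₀ t)
    · rw [dualTestFunction_of_notMem ht, mul_zero]
  rw [ENNReal.ofReal_rpow_of_nonneg hvf hpp'.nonneg, mul_dualTestFunction_rpow hpp' hv₀ hφ₀]

theorem integrable_dualTestFunction_mul (hp' : 1 < p') (hv : Measurable v) (hφ : Measurable φ)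
    (hE : MeasurableSet E) (hv₀ : ∀ t ∈ E, 0 < v t) (hφ₀ : ∀ t ∈ E, 0 ≤ φ t)
    (hfin : ∫⁻ t in E, ENNReal.ofReal (v t ^ (-p') * φ t ^ p') ∂μ ≠ ∞) :
    Integrable (fun t => dualTestFunction p' v φ E t * φ t) μ := by
  rw [← lintegral_dualTestFunction_mul hp' hE hφ₀] at hfin
  exact (lintegral_ofReal_ne_top_iff_integrable
    ((measurable_dualTestFunction hv hφ hE).mul hφ).aestronglyMeasurable
    (.of_forall (dualTestFunction_mul_nonneg hv₀ hφ₀))).1 hfin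

theorem le_enorm_integral_dualTestFunction_mul (hp' : 1 < p') (hκ : 0 < κ) (hv : Measurable v)
    (hφ : Measurable φ) {k : α → ℂ} (hk : Measurable k) (hE : MeasurableSet E)
    (hv₀ : ∀ t ∈ E, 0 < v t) (hφ₀ : ∀ t ∈ E, 0 ≤ φ t)
    (hφk : ∀ t ∈ E, SectorMajorant κ (φ t) (k t))
    (hfin : ∫⁻ t in E, ENNReal.ofReal (v t ^ (-p') * φ t ^ p') ∂μ ≠ ∞) :
    ENNReal.ofReal κ * ∫⁻ t in E, ENNReal.ofReal (v t ^ (-p') * φ t ^ p') ∂μ ≤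
      ‖∫ t, (dualTestFunction p' v φ E t : ℂ) * k t ∂μ‖ₑ := by
  set f := dualTestFunction p' v φ E
  have hf : Measurable f := measurable_dualTestFunction hv hφ hE
  have hsector : SectorMajorant κ (∫ t, (f t : ℂ) * φ t ∂μ) (∫ t, (f t : ℂ) * k t ∂μ) := by
    refine .integral hκ (by fun_prop) (by fun_prop) (.of_forall fun t => ?_)
    by_cases ht : t ∈ E
    · exact (hφk t ht).ofReal_mul (dualTestFunction_nonneg hv₀ hφ₀ t)
    · simpa only [f, dualTestFunction_of_notMem ht, Complex.ofReal_zero, zero_mul] using .zero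
  have hre : (∫ t, (f t : ℂ) * φ t ∂μ).re = ∫ t, f t * φ t ∂μ := by
    simp only [← Complex.ofReal_mul, integral_complex_ofReal, Complex.ofReal_re]
  rw [← lintegral_dualTestFunction_mul hp' hE hφ₀,
    ← ofReal_integral_eq_lintegral_ofReal
      (integrable_dualTestFunction_mul hp' hv hφ hE hv₀ hφ₀ hfin)
      (.of_forall (dualTestFunction_mul_nonneg hv₀ hφ₀)),
    ← ENNReal.ofReal_mul hκ.le, ← hre, ← ofReal_norm]
  exact ENNReal.ofReal_le_ofReal (hsector.mul_re_le.trans (Complex.re_le_norm _))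

end DualTestFunction

section KernelInequality

variable {α β : Type*} [MeasurableSpace α] [MeasurableSpace β] {μ : Measure α} {ν : Measure β}
  {p p' q κ : ℝ} {v φ : α → ℝ} {U : β → ℝ≥0∞} {K : β → α → ℂ} {A : Set α} {B : Set β} {C : ℝ≥0∞}

theorem rpow_setLIntegral_mul_rpow_setLIntegral_le_of_kernel_inequality [SigmaFinite μ]
    (hpp' : p.HolderConjugate p') (hq : 0 < q) (hκ : 0 < κ) (hA : MeasurableSet A)
    (hB : MeasurableSet B) (hv : Measurable v) (hφ : Measurable φ) (hK : ∀ x ∈ B, Measurable (K x))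
    (hv₀ : ∀ t ∈ A, 0 < v t) (hφ₀ : ∀ t ∈ A, 0 ≤ φ t)
    (hφK : ∀ x ∈ B, ∀ t ∈ A, SectorMajorant κ (φ t) (K x t))
    (h : ∀ f : α → ℝ, Measurable f → (∀ t, 0 ≤ f t) → (∀ t ∉ A, f t = 0) →
      ∫⁻ t, ENNReal.ofReal (v t * f t) ^ p ∂μ < ∞ → Integrable (fun t => f t * φ t) μ →
      (∫⁻ x, U x * ‖∫ t, (f t : ℂ) * K x t ∂μ‖ₑ ^ q ∂ν) ^ (1 / q) ≤
        C * (∫⁻ t, ENNReal.ofReal (v t * f t) ^ p ∂μ) ^ (1 / p)) :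
    (∫⁻ x in B, U x ∂ν) ^ (1 / q) *
      (∫⁻ t in A, ENNReal.ofReal (v t ^ (-p') * φ t ^ p') ∂μ) ^ (1 / p') ≤
      C / ENNReal.ofReal κ := by
  have hp' : 1 < p' := hpp'.symm.lt
  rw [← withDensity_apply _ hA]
  refine mul_measure_rpow_le_of_forall_lt_top hA (one_div_pos.2 hpp'.symm.pos)
    fun E hEA hE hfin => ?_
  rw [withDensity_apply _ hE] at hfin ⊢
  have hvE (t : α) (ht : t ∈ E) : 0 < v t := hv₀ t (hEA ht)
  have hφE (t : α) (ht : t ∈ E) : 0 ≤ φ t := hφ₀ t (hEA ht)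
  have htest := h _ (measurable_dualTestFunction hv hφ hE) (dualTestFunction_nonneg hvE hφE)
    (fun t ht => dualTestFunction_of_notMem (mt (@hEA t) ht))
    ((lintegral_mul_dualTestFunction_rpow hpp' hE hvE hφE).trans_lt hfin)
    (integrable_dualTestFunction_mul hp' hv hφ hE hvE hφE hfin.ne)
  rw [lintegral_mul_dualTestFunction_rpow hpp' hE hvE hφE] at htest
  refine mul_rpow_one_div_conj_le hpp' (ENNReal.ofReal_pos.2 hκ).ne' ENNReal.ofReal_ne_top hfin.ne
    ((rpow_setLIntegral_mul_le hB hq fun x hx => ?_).trans htest)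
  exact le_enorm_integral_dualTestFunction_mul hp' hκ hv hφ (hK x hx) hE hvE hφE
    (fun t ht => hφK x hx t (hEA ht)) hfin.ne

end KernelInequality

section RadialMeasure

variable {m₁ m₂ : ℕ}

/-- The measure `Δ(t) dt` on `(0, ∞)`, extended by zero to `ℝ`: the radial part of the Riemannian
measure in polar coordinates. -/
noncomputable def radialMeasure (m₁ m₂ : ℕ) : Measure ℝ :=
  (volume.restrict (Ioi 0)).withDensity fun t => ENNReal.ofReal (Δ m₁ m₂ t)

instance : SigmaFinite (radialMeasure m₁ m₂) :=
  inferInstanceAs (SigmaFinite (Measure.withDensity _ _))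

theorem lintegral_radialMeasure (f : ℝ → ℝ≥0∞) :
    ∫⁻ t, f t ∂radialMeasure m₁ m₂ =
      ∫⁻ t in Ioi 0, f t * ENNReal.ofReal (Δ m₁ m₂ t) := by
  simp only [radialMeasure, lintegral_withDensity_eq_lintegral_mul_non_measurable _
    measurable_delta.ennreal_ofReal (.of_forall fun _ => ENNReal.ofReal_lt_top), Pi.mul_apply,
    mul_comm]

theorem setLIntegral_radialMeasure {A : Set ℝ} (hA : MeasurableSet A) (hA₀ : A ⊆ Ioi 0)
    (f : ℝ → ℝ≥0∞) :
    ∫⁻ t in A, f t ∂radialMeasure m₁ m₂ = ∫⁻ t in A, f t * ENNReal.ofReal (Δ m₁ m₂ t) := by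
  rw [radialMeasure, setLIntegral_withDensity_eq_setLIntegral_mul_non_measurable _
    measurable_delta.ennreal_ofReal f hA (.of_forall fun _ => ENNReal.ofReal_lt_top),
    Measure.restrict_restrict_of_subset hA₀]
  simp only [Pi.mul_apply, mul_comm]

theorem integrable_radialMeasure_iff {f : ℝ → ℝ} :
    Integrable f (radialMeasure m₁ m₂) ↔
      Integrable (fun t => f t * Δ m₁ m₂ t) (volume.restrict (Ioi 0)) := by
  rw [radialMeasure, integrable_withDensity_iff measurable_delta.ennreal_ofReal
    (.of_forall fun _ => ENNReal.ofReal_lt_top)]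
  refine integrable_congr (ae_restrict_of_forall_mem measurableSet_Ioi fun t ht => ?_)
  dsimp only
  rw [ENNReal.toReal_ofReal (delta_nonneg (mem_Ioi.1 ht).le)]

theorem integral_radialMeasure (f : ℝ → ℂ) :
    ∫ t, f t ∂radialMeasure m₁ m₂ = ∫ t in Ioi 0, f t * (Δ m₁ m₂ t : ℝ) := by
  rw [radialMeasure, integral_withDensity_eq_integral_toReal_smul measurable_delta.ennreal_ofReal
    (.of_forall fun _ => ENNReal.ofReal_lt_top)]
  refine setIntegral_congr_fun measurableSet_Ioi fun t ht => ?_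
  rw [ENNReal.toReal_ofReal (delta_nonneg (mem_Ioi.1 ht).le), Complex.real_smul, mul_comm]

end RadialMeasure

theorem cos_le_cos_mul_of_mem_Ioo {θ s l r : ℝ} (hs : 0 < s) (hθ : θ ≤ Real.pi)
    (hl : l ∈ Ioo 0 (θ / s)) (hr : r ∈ Icc 0 s) : Real.cos θ ≤ Real.cos (l * r) := by
  refine Real.cos_le_cos_of_nonneg_of_le_pi (mul_nonneg hl.1.le hr.1) hθ ?_
  calc l * r ≤ θ / s * s := mul_le_mul hl.2.le hr.2 hr.1 (hl.1.le.trans hl.2.le)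
    _ = θ := div_mul_cancel₀ θ hs.ne'

theorem stmt9_general (m₁ m₂ : ℕ) (_hm₁ : 1 ≤ m₁) (_hm₂ : 1 ≤ m₂) (b : ℝ)
    {p q p' : ℝ} (hpp' : p.HolderConjugate p') (hq : 0 < q)
    {u : ℝ → ℝ≥0∞} {v : ℝ → ℝ} (hv : Measurable v) (hv₀ : ∀ t ∈ Ioi (0 : ℝ), 0 < v t)
    {C : ℝ}
    (hPitt : ∀ f : ℝ → ℝ, Measurable f → (∀ t, 0 ≤ f t) →
      (∃ R : ℝ, ∀ t, R ≤ t → f t = 0) →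
      (∫⁻ t in Ioi (0 : ℝ),
          ENNReal.ofReal (v t * f t) ^ p * ENNReal.ofReal (Δ m₁ m₂ t)) < ⊤ →
      Integrable (fun t => f t * (PhiC m₁ m₂ (Complex.I * b) t).re * Δ m₁ m₂ t)
        (volume.restrict (Ioi 0)) →
      (∫⁻ lam : ℝ,
          u lam ^ q *
            (‖∫ t in Ioi (0 : ℝ),
                (f t : ℂ) * PhiC m₁ m₂ (lam + Complex.I * b) t * (Δ m₁ m₂ t : ℝ)‖₊ : ℝ≥0∞) ^ q *
            ENNReal.ofReal (densHC m₁ m₂ lam)) ^ (1 / q)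
        ≤ ENNReal.ofReal C *
          (∫⁻ t in Ioi (0 : ℝ),
            ENNReal.ofReal (v t * f t) ^ p * ENNReal.ofReal (Δ m₁ m₂ t)) ^ (1 / p))
    {θ₀ : ℝ} (hθ₀ : 0 < θ₀) (hθ₀' : θ₀ < Real.pi / 2) {s : ℝ} (hs : 0 < s) :
    (∫⁻ lam in Ioo 0 (θ₀ / s), u lam ^ q * ENNReal.ofReal (densHC m₁ m₂ lam)) ^ (1 / q) *
        (∫⁻ t in Ioo 0 s,
          ENNReal.ofReal (v t) ^ (-p') *
            ENNReal.ofReal (PhiC m₁ m₂ (Complex.I * b) t).re ^ p' *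
            ENNReal.ofReal (Δ m₁ m₂ t)) ^ (1 / p')
      ≤ ENNReal.ofReal (C / Real.cos θ₀) := by
  have hcos : 0 < Real.cos θ₀ := Real.cos_pos_of_mem_Ioo ⟨by linarith, hθ₀'⟩
  have hs₀ : Ioo 0 s ⊆ Ioi 0 := Ioo_subset_Ioi_self
  have hsector (l : ℝ) (hl : l ∈ Ioo 0 (θ₀ / s)) (t : ℝ) (ht : t ∈ Ioo 0 s) :
      SectorMajorant (Real.cos θ₀) (PhiC m₁ m₂ (Complex.I * b) t).re
        (PhiC m₁ m₂ (l + Complex.I * b) t) :=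
    (sectorMajorant_phiC hcos ht.1.le fun r hr => cos_le_cos_mul_of_mem_Ioo hs (by linarith) hl
      ⟨hr.1.le, hr.2.trans ht.2.le⟩).ofReal_re
  have hweight : ∫⁻ t in Ioo 0 s, ENNReal.ofReal (v t) ^ (-p') *
        ENNReal.ofReal (PhiC m₁ m₂ (Complex.I * b) t).re ^ p' ∂radialMeasure m₁ m₂ =
      ∫⁻ t in Ioo 0 s, ENNReal.ofReal
        (v t ^ (-p') * (PhiC m₁ m₂ (Complex.I * b) t).re ^ p') ∂radialMeasure m₁ m₂ := by
    refine setLIntegral_congr_fun measurableSet_Ioo fun t ht => ?_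
    rw [ENNReal.ofReal_rpow_of_pos (hv₀ t (hs₀ ht)), ENNReal.ofReal_rpow_of_nonneg
      (phiC_re_nonneg ht.1.le) hpp'.symm.nonneg,
      ENNReal.ofReal_mul (Real.rpow_nonneg (hv₀ t (hs₀ ht)).le _)]
  rw [← setLIntegral_radialMeasure measurableSet_Ioo hs₀, hweight, ENNReal.ofReal_div_of_pos hcos]
  refine rpow_setLIntegral_mul_rpow_setLIntegral_le_of_kernel_inequality hpp' hq hcos
    measurableSet_Ioo measurableSet_Ioo hv (Complex.measurable_re.comp (measurable_phiC _))
    (fun l _ => measurable_phiC _) (fun t ht => hv₀ t (hs₀ ht)) (fun t ht => phiC_re_nonneg ht.1.le)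
    hsector fun f hf hf₀ hfs hfin hint => ?_
  have hbdd : ∃ R : ℝ, ∀ t, R ≤ t → f t = 0 :=
    ⟨s, fun t ht => hfs t fun hts => hts.2.not_ge ht⟩
  simp only [lintegral_radialMeasure, integrable_radialMeasure_iff, integral_radialMeasure]
    at hfin hint ⊢
  simpa only [mul_right_comm, enorm_eq_nnnorm] using hPitt f hf hf₀ hbdd hfin hint

/-- necessary condition for Pitt's inequality, radial form. -/
theorem stmt9 (m₁ m₂ : ℕ) (hm₁ : 1 ≤ m₁) (hm₂ : 1 ≤ m₂)
    (q₀ : ENNReal) (hq₀ : 1 ≤ q₀)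
    (p q p' : ℝ) (hp : 1 < p) (hq : 1 < q) (hp'def : p' = p / (p - 1))
    (u : ℝ → ℝ) (v : ℝ → ℝ) (hu : Measurable u) (hv : Measurable v)
    (hu0 : ∀ lam, 0 ≤ u lam) (hv0 : ∀ t ∈ Ioi (0:ℝ), 0 < v t)
    (huloc : ∀ R : ℝ, 0 < R →
      (∫⁻ lam in Icc (-R) R,
        ENNReal.ofReal (u lam) ^ q * ENNReal.ofReal (densHC m₁ m₂ lam)) < ⊤)
    (hvloc : ∀ R : ℝ, 0 < R →
      (∫⁻ t in Ioc (0:ℝ) R,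
        ENNReal.ofReal (v t) ^ (-p') * ENNReal.ofReal (Δ m₁ m₂ t)) < ⊤)
    (C : ℝ) (hC : 0 < C)
    (hPitt : ∀ f : ℝ → ℝ, Measurable f → (∀ t, 0 ≤ f t) →
      (∃ R : ℝ, ∀ t, R ≤ t → f t = 0) →
      (∫⁻ t in Ioi (0:ℝ),
          ENNReal.ofReal (v t * f t) ^ p * ENNReal.ofReal (Δ m₁ m₂ t)) < ⊤ →
      Integrable
        (fun t => f t * (PhiC m₁ m₂ (Complex.I * (rhoP m₁ m₂ q₀ : ℝ)) t).re * Δ m₁ m₂ t)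
        (volume.restrict (Ioi 0)) →
      (∫⁻ lam : ℝ,
          ENNReal.ofReal (u lam) ^ q *
            (‖∫ t in Ioi (0:ℝ),
                (f t : ℂ) * PhiC m₁ m₂ ((lam : ℂ) + Complex.I * (rhoP m₁ m₂ q₀ : ℝ)) t *
                  (Δ m₁ m₂ t : ℝ)‖₊ : ℝ≥0∞) ^ q *
            ENNReal.ofReal (densHC m₁ m₂ lam)) ^ (1/q)
        ≤ ENNReal.ofReal C *
          (∫⁻ t in Ioi (0:ℝ),
            ENNReal.ofReal (v t * f t) ^ p * ENNReal.ofReal (Δ m₁ m₂ t)) ^ (1/p)) :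
    ∀ θ₀ : ℝ, 0 < θ₀ → θ₀ < Real.pi / 2 →
      ∃ M : ℝ, ∀ s : ℝ, 0 < s →
        (∫⁻ lam in Ioo (0:ℝ) (θ₀/s),
            ENNReal.ofReal (u lam) ^ q * ENNReal.ofReal (densHC m₁ m₂ lam)) ^ (1/q) *
        (∫⁻ t in Ioo (0:ℝ) s,
            ENNReal.ofReal (v t) ^ (-p') *
              ENNReal.ofReal ((PhiC m₁ m₂ (Complex.I * (rhoP m₁ m₂ q₀ : ℝ)) t).re) ^ p' *
              ENNReal.ofReal (Δ m₁ m₂ t)) ^ (1/p')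
          ≤ ENNReal.ofReal M := by
  exact fun θ₀ hθ₀ hθ₀' => ⟨C / Real.cos θ₀, fun s hs => stmt9_general m₁ m₂ hm₁ hm₂ _
    ((Real.holderConjugate_iff_eq_conjExponent hp).2 hp'def) (zero_lt_one.trans hq) hv hv0 hPitt
    hθ₀ hθ₀' hs⟩
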